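/- Assume that W_J is finite. Then every orbit O of the δ-twisted partial conjugation action of W_J on W contains an element v with ℓ(v) ≤ ℓ(v') for all v' ∈ O and such that v = w x for some w ∈ W^J and x ∈ W_{I(J,w,δ)}. -/

import Mathlib

open CoxeterSystem

variable {B : Type*} [Finite B] {W : Type*} [Group W] {M : CoxeterMatrix B}

namespace PartialConjugation

/-- The standard parabolic subgroup `W_J` of `W`, generated by the simple
reflections indexed by `J`. -/
def parab (cs : CoxeterSystem M W) (J : Set B) : Subgroup W :=
  Subgroup.closure (cs.simple '' J)

/-- The simple reflection `s_j` (for `j ∈ J`), viewed as an element of `W_J`. -/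
def sJ (cs : CoxeterSystem M W) (J : Set B) (j : B) (hj : j ∈ J) : parab cs J :=
  ⟨cs.simple j, Subgroup.subset_closure ⟨j, hj, rfl⟩⟩

/-- `w ∈ W^J`: `w` is a minimal length representative of its left coset `w W_J`. -/
def IsMinRep (cs : CoxeterSystem M W) (J : Set B) (w : W) : Prop :=
  ∀ v ∈ parab cs J, cs.length w ≤ cs.length (w * v)

variable (cs : CoxeterSystem M W) (J J' : Set B) (δ : parab cs J ≃* parab cs J')

/-- `δ` carries the set of simple reflections indexed by `J` onto the set of
simple reflections indexed by `J'`. -/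
def MapsSimples : Prop :=
  (∀ j, ∀ hj : j ∈ J, ∃ j' ∈ J', (δ (sJ cs J j hj) : W) = cs.simple j') ∧
  (∀ j' ∈ J', ∃ j, ∃ hj : j ∈ J, (δ (sJ cs J j hj) : W) = cs.simple j')

/-- `K` is a `w`-special subset of `J`. -/
def WSpecial (w : W) (K : Set B) : Prop :=
  K ⊆ J ∧ ∀ k ∈ K, ∃ j, ∃ hjJ : j ∈ J, j ∈ K ∧
    w * cs.simple k * w⁻¹ = (δ (sJ cs J j hjJ) : W)

/-- The set `I(J, w, δ)`: the union of all `w`-special subsets of `J`. -/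
def Iset (w : W) : Set B := ⋃₀ {K | WSpecial cs J J' δ w K}

/-- The set `W_J ·_δ V = {δ(u) v u⁻¹ : u ∈ W_J, v ∈ V}`. -/
def orbSet (V : Set W) : Set W :=
  {x | ∃ u : parab cs J, ∃ v ∈ V, x = (δ u : W) * v * (u : W)⁻¹}

/-- The orbit of `x` under the `δ`-twisted partial conjugation action of `W_J`. -/
def orbitOf (x : W) : Set W := orbSet cs J J' δ {x}

/-- The coset `w W_{I(J,w,δ)}`. -/
def coset (w : W) : Set W :=
  {x | ∃ v ∈ parab cs (Iset cs J J' δ w), x = w * v}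

/-- Elementary step `v →_i v'` of `δ`-twisted conjugation: `v' = δ(s_i) v s_i`
with `i ∈ J` and `ℓ(v') ≤ ℓ(v)`. -/
def StepRel (v v' : W) : Prop :=
  ∃ i, ∃ hi : i ∈ J, v' = (δ (sJ cs J i hi) : W) * v * cs.simple i ∧
    cs.length v' ≤ cs.length v

/-- The relation `v →_{J,δ} v'`. -/
def ToRel : W → W → Prop := Relation.ReflTransGen (StepRel cs J J' δ)

/-- The relation `v ≈_{J,δ} v'`. -/
def Approx (v v' : W) : Prop := ToRel cs J J' δ v v' ∧ ToRel cs J J' δ v' v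

/-- The Bruhat order on `W`. -/
def bruhatLE (cs : CoxeterSystem M W) : W → W → Prop :=
  Relation.ReflTransGen
    (fun a b => ∃ t, cs.IsReflection t ∧ b = a * t ∧ cs.length a < cs.length b)

/-- The set of minimal length elements in the orbit of `x`. -/
def orbMin (x : W) : Set W :=
  {y ∈ orbitOf cs J J' δ x | ∀ z ∈ orbitOf cs J J' δ x, cs.length y ≤ cs.length z}

/-!
Write `z = x' w x` with `x' ∈ W_{J'}`, `x ∈ W_J` and `w` minimal in `W_{J'} w W_J`. If conjugation
by `w` sends every simple reflection of `W_J` to one of `W_{J'}`, then `J` is `w`-special, and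
conjugating by the inverse of `δ⁻¹(x')` moves `x'` to the right of `w` without increasing the
length. Otherwise conjugating by `x` turns `z` into `δ(x) x' w`, where `δ(x) x' ∈ W_{J'}`, and it
remains to treat `δ(x) x'` under the partial conjugation twisted by `δ ∘ Ad(w)⁻¹`, which is
defined on the smaller parabolic subgroup generated by `J' ∩ w J w⁻¹`. No step increases the
length, so starting from a minimal element of the orbit gives the claim.
-/

section General

variable {B W : Type*} [Group W] {M : CoxeterMatrix B} (cs : CoxeterSystem M W) (J J' : Set B)
  (δ : parab cs J ≃* parab cs J')

section Coxeter

open Classical in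
/-- The map `(t, e) ↦ (s_i t s_i, e + [t = s_i])` on `W × ℤ/2`. It extends the conjugation action
and records in the second component how often a reflection `t` is met as an inversion. -/
noncomputable def signedConj (i : B) : Function.End (W × ZMod 2) :=
  fun p => (cs.simple i * p.1 * cs.simple i, p.2 + if p.1 = cs.simple i then 1 else 0)

open Classical in
theorem prod_map_signedConj_apply (ω : List B) (t : W) (e : ZMod 2) :
    (ω.map (signedConj cs)).prod (t, e) =
      (cs.wordProd ω * t * (cs.wordProd ω)⁻¹, e + ((cs.rightInvSeq ω).count t : ZMod 2)) := by
  induction ω with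
  | nil => simp [Function.End.one_def]
  | cons i ω ih =>
    have conj_eq_iff : cs.wordProd ω * t * (cs.wordProd ω)⁻¹ = cs.simple i ↔
        (cs.wordProd ω)⁻¹ * cs.simple i * cs.wordProd ω = t := by
      rw [mul_inv_eq_iff_eq_mul, mul_assoc, inv_mul_eq_iff_eq_mul, eq_comm]
    change signedConj cs i ((ω.map (signedConj cs)).prod (t, e)) = _
    rw [ih]
    refine Prod.ext (by simp [signedConj, cs.wordProd_cons, mul_assoc]) ?_
    simp [signedConj, CoxeterSystem.rightInvSeq, List.count_cons, add_assoc, conj_eq_iff]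

theorem prod_map_alternatingWord_two_mul {G : Type*} [Monoid G] (f : B → G) (i j : B) (m : ℕ) :
    ((alternatingWord i j (2 * m)).map f).prod = (f i * f j) ^ m := by
  induction m with
  | zero => simp [alternatingWord]
  | succ m ih =>
    rw [show 2 * (m + 1) = 2 * m + 1 + 1 by ring, alternatingWord_succ', alternatingWord_succ']
    simp [ih, pow_succ', mul_assoc, parity_simps]

theorem reverse_alternatingWord_two_mul (i j : B) (m : ℕ) :
    (alternatingWord i j (2 * m)).reverse = alternatingWord j i (2 * m) := by
  refine List.ext_getElem (by simp) fun k hk _ => ?_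
  have hk : k < 2 * m := by simpa using hk
  rw [List.getElem_reverse, getElem_alternatingWord _ _ _ _ (by simp; omega),
    getElem_alternatingWord _ _ _ _ hk]
  grind [length_alternatingWord]

open Classical in
/-- Counted from the right, the `k`-th inversion of the word is `s_j (s_i s_j)^k`, which is periodic
in `k` with period `M i j`; so the inversions of this word of length `2 * M i j` come in equal
pairs. -/
theorem even_count_rightInvSeq_alternatingWord (i j : B) (t : W) :
    Even ((cs.rightInvSeq (alternatingWord i j (2 * M i j))).count t) := by
  set p := M i j
  have getElem_lis (k : ℕ) (hk : k < 2 * p) :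
      (cs.leftInvSeq (alternatingWord j i (2 * p)))[k]'(by simpa using hk) =
        cs.simple j * (cs.simple i * cs.simple j) ^ k := by
    rw [cs.getElem_leftInvSeq_alternatingWord j i p k hk, cs.prod_alternatingWord_eq_mul_pow]
    simp [show (2 * k + 1) / 2 = k by omega]
  have lis_eq_append_self : cs.leftInvSeq (alternatingWord j i (2 * p)) =
      (cs.leftInvSeq (alternatingWord j i (2 * p))).take p ++
        (cs.leftInvSeq (alternatingWord j i (2 * p))).take p := by
    refine List.ext_getElem (by simp; omega) fun k hk _ => ?_
    have hk : k < 2 * p := by simpa using hk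
    by_cases hkp : k < p
    · rw [List.getElem_append_left (by simp; omega), List.getElem_take]
    · rw [List.getElem_append_right (by simp; omega), List.getElem_take, getElem_lis k hk,
        getElem_lis _ (by simp; omega)]
      obtain ⟨l, rfl⟩ := Nat.exists_eq_add_of_le (not_lt.mp hkp)
      simp [pow_add, p, show min p (2 * p) = p by omega]
  rw [← reverse_alternatingWord_two_mul, cs.rightInvSeq_reverse, List.count_reverse,
    lis_eq_append_self, List.count_append]
  exact Even.add_self _

theorem isLiftable_signedConj : M.IsLiftable (signedConj cs) := by
  classical
  intro i j
  funext ⟨t, e⟩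
  rw [← prod_map_alternatingWord_two_mul, prod_map_signedConj_apply,
    (ZMod.natCast_eq_zero_iff_even).2 (even_count_rightInvSeq_alternatingWord cs i j t),
    CoxeterSystem.wordProd, prod_map_alternatingWord_two_mul, cs.simple_mul_simple_pow]
  simp [Function.End.one_def]

/-- The parity of the number of occurrences of `t` in the right inversion sequence of a word
for `w`. It is defined through the action of `W` on `W × ℤ/2`, which makes it visibly independent
of the word. -/
noncomputable def inversionParity (w t : W) : ZMod 2 :=
  (cs.lift ⟨signedConj cs, isLiftable_signedConj cs⟩ w (t, 0)).2

open Classical in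
theorem inversionParity_wordProd (ω : List B) (t : W) :
    inversionParity cs (cs.wordProd ω) t = (cs.rightInvSeq ω).count t := by
  have lift_wordProd : cs.lift ⟨signedConj cs, isLiftable_signedConj cs⟩ (cs.wordProd ω) =
      (ω.map (signedConj cs)).prod := by
    rw [CoxeterSystem.wordProd, map_list_prod, List.map_map]
    congr 2
    exact funext fun i => cs.lift_apply_simple (isLiftable_signedConj cs) i
  simp [inversionParity, lift_wordProd, prod_map_signedConj_apply]

theorem inversionParity_mul (u v t : W) :
    inversionParity cs (u * v) t =
      inversionParity cs v t + inversionParity cs u (v * t * v⁻¹) := by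
  classical
  obtain ⟨α, -, rfl⟩ := cs.exists_isReduced u
  obtain ⟨β, -, rfl⟩ := cs.exists_isReduced v
  have h := congrArg Prod.snd (prod_map_signedConj_apply cs (α ++ β) t 0)
  rw [List.map_append, List.prod_append] at h
  change ((α.map (signedConj cs)).prod ((β.map (signedConj cs)).prod (t, 0))).2 = _ at h
  rw [← cs.wordProd_append]
  simp only [inversionParity_wordProd]
  simpa [prod_map_signedConj_apply] using h.symm

/-- For `t = u s_i u⁻¹`, the contributions of `u` and `u⁻¹` cancel and the middle letter counts
once. -/
theorem inversionParity_self {t : W} (ht : cs.IsReflection t) : inversionParity cs t t = 1 := by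
  obtain ⟨u, i, rfl⟩ := ht
  have parity_simple : inversionParity cs (cs.simple i) (cs.simple i) = 1 := by
    classical simpa using inversionParity_wordProd cs [i] (cs.simple i)
  have parity_cancel : inversionParity cs u⁻¹ (u * cs.simple i * u⁻¹) +
      inversionParity cs u (cs.simple i) = 0 := by
    classical
    have h := inversionParity_mul cs u u⁻¹ (u * cs.simple i * u⁻¹)
    have h_one := inversionParity_wordProd cs [] (u * cs.simple i * u⁻¹)
    simpa [mul_assoc] using h.symm.trans (by simpa using h_one)
  rw [mul_assoc, inversionParity_mul, inversionParity_mul]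
  simp only [mul_assoc, mul_inv_rev, inv_mul_cancel_left, inv_inv, inv_mul_cancel, mul_one,
    cs.inv_simple, cs.simple_mul_simple_self] at parity_cancel ⊢
  rw [parity_simple, add_right_comm, parity_cancel, zero_add]

theorem mem_rightInvSeq_of_isRightInversion {ω : List B} {t : W}
    (ht : cs.IsRightInversion (cs.wordProd ω) t) : t ∈ cs.rightInvSeq ω := by
  classical
  obtain ⟨href, hlt⟩ := ht
  by_contra hmem
  obtain ⟨ω', hω', hprod⟩ := cs.exists_isReduced (cs.wordProd ω * t)
  have parity_mul : inversionParity cs (cs.wordProd ω * t) t = 1 := by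
    rw [inversionParity_mul, inversionParity_self cs href, mul_assoc, mul_inv_cancel, mul_one,
      inversionParity_wordProd, List.count_eq_zero_of_not_mem hmem, Nat.cast_zero, add_zero]
  have hmem' : t ∈ cs.rightInvSeq ω' := by
    by_contra hmem'
    rw [hprod, inversionParity_wordProd, List.count_eq_zero_of_not_mem hmem'] at parity_mul
    simp at parity_mul
  have hlt' := (cs.isRightInversion_of_mem_rightInvSeq hω' hmem').2
  rw [← hprod, mul_assoc, href.mul_self, mul_one] at hlt'
  exact hlt.not_gt hlt'

theorem exists_wordProd_mul_eq_wordProd_eraseIdx {ω : List B} {t : W}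
    (ht : cs.IsRightInversion (cs.wordProd ω) t) :
    ∃ k < ω.length, cs.wordProd ω * t = cs.wordProd (ω.eraseIdx k) := by
  obtain ⟨k, hk, rfl⟩ := List.getElem_of_mem (mem_rightInvSeq_of_isRightInversion cs ht)
  refine ⟨k, by simpa using hk, ?_⟩
  rw [← cs.wordProd_mul_getD_rightInvSeq, List.getD_eq_getElem _ _ hk]

theorem exists_isReduced_sublist (ω : List B) :
    ∃ ω', ω'.Sublist ω ∧ cs.IsReduced ω' ∧ cs.wordProd ω' = cs.wordProd ω := by
  induction ω using List.reverseRecOn with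
  | nil => exact ⟨[], .slnil, by simp [CoxeterSystem.IsReduced], rfl⟩
  | append_singleton ω i ih =>
    obtain ⟨ω', hsub, hred, hprod⟩ := ih
    by_cases hi : cs.IsRightDescent (cs.wordProd ω') i
    · obtain ⟨k, hk, he⟩ := exists_wordProd_mul_eq_wordProd_eraseIdx cs
        ((cs.isRightInversion_simple_iff_isRightDescent _ i).2 hi)
      refine ⟨ω'.eraseIdx k, ((ω'.eraseIdx_sublist k).trans hsub).trans
        (List.sublist_append_left _ _), ?_, by simp [← he, hprod, cs.wordProd_append]⟩
      have hlen := cs.isRightDescent_iff.1 hi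
      have := List.length_eraseIdx_add_one hk
      rw [CoxeterSystem.IsReduced, ← he]
      have := hred.eq
      omega
    · refine ⟨ω' ++ [i], hsub.append_right _, ?_, by simp [cs.wordProd_append, hprod]⟩
      have hlen := cs.not_isRightDescent_iff.1 hi
      simp [CoxeterSystem.IsReduced, cs.wordProd_append, hlen, hred.eq]

end Coxeter

section Parabolic

variable {cs J J'}

theorem simple_mem_parab {i : B} (hi : i ∈ J) : cs.simple i ∈ parab cs J :=
  Subgroup.subset_closure ⟨i, hi, rfl⟩

theorem parab_mono {K : Set B} (h : J ⊆ K) : parab cs J ≤ parab cs K :=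
  Subgroup.closure_mono (Set.image_mono h)

theorem wordProd_mem_parab {ω : List B} (hω : ∀ i ∈ ω, i ∈ J) : cs.wordProd ω ∈ parab cs J :=
  Subgroup.list_prod_mem _ <| List.forall_mem_map.2 fun i hi => simple_mem_parab (hω i hi)

theorem exists_wordProd_eq_of_mem_parab {x : W} (hx : x ∈ parab cs J) :
    ∃ ω : List B, (∀ i ∈ ω, i ∈ J) ∧ cs.wordProd ω = x := by
  induction hx using Subgroup.closure_induction_left with
  | one => exact ⟨[], by simp, cs.wordProd_nil⟩
  | mul_left s hs y _ ih | inv_mul_cancel s hs y _ ih =>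
    obtain ⟨i, hi, rfl⟩ := hs
    obtain ⟨ω, hω, rfl⟩ := ih
    exact ⟨i :: ω, by simpa using ⟨hi, hω⟩, by simp [cs.wordProd_cons]⟩

theorem exists_isReduced_of_mem_parab {x : W} (hx : x ∈ parab cs J) :
    ∃ ω : List B, (∀ i ∈ ω, i ∈ J) ∧ cs.IsReduced ω ∧ cs.wordProd ω = x := by
  obtain ⟨ω, hω, rfl⟩ := exists_wordProd_eq_of_mem_parab hx
  obtain ⟨ω', hsub, hred, hprod⟩ := exists_isReduced_sublist cs ω
  exact ⟨ω', fun i hi => hω i (hsub.subset hi), hred, hprod⟩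

/-- In a reduced subword of the concatenation of reduced words for `w` and `u`, the letters
coming from `w` must all survive, by minimality of `w`. -/
theorem IsMinRep.length_mul {w u : W} (hw : IsMinRep cs J w) (hu : u ∈ parab cs J) :
    cs.length (w * u) = cs.length w + cs.length u := by
  obtain ⟨α, hα, rfl⟩ := cs.exists_isReduced w
  obtain ⟨β, hβJ, -, rfl⟩ := exists_isReduced_of_mem_parab hu
  obtain ⟨ω, hsub, hred, hprod⟩ := exists_isReduced_sublist cs (α ++ β)
  obtain ⟨α', β', rfl, hα', hβ'⟩ := List.sublist_append_iff.1 hsub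
  rw [cs.wordProd_append, cs.wordProd_append] at hprod
  have hα'_length : cs.length (cs.wordProd α) ≤ α'.length := by
    have hmem : cs.wordProd β * (cs.wordProd β')⁻¹ ∈ parab cs J :=
      mul_mem hu (inv_mem (wordProd_mem_parab fun i hi => hβJ i (hβ'.subset hi)))
    refine (hw _ hmem).trans ?_
    rw [← mul_assoc, ← hprod, mul_inv_cancel_right]
    exact cs.length_wordProd_le α'
  obtain rfl : α' = α := hα'.eq_of_length_le (hα.eq ▸ hα'_length)
  have hβ'_prod : cs.wordProd β' = cs.wordProd β := mul_left_cancel hprod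
  refine le_antisymm (cs.length_mul_le _ _) ?_
  rw [← hβ'_prod, ← cs.wordProd_append, hred.eq, hα.eq, List.length_append]
  exact Nat.add_le_add_left (cs.length_wordProd_le β') _

variable (cs J) in
theorem exists_isMinRep_mul (z : W) :
    ∃ w, IsMinRep cs J w ∧ ∃ x ∈ parab cs J, z = w * x ∧
      cs.length z = cs.length w + cs.length x := by
  obtain ⟨v, hv, hmin⟩ := exists_minimalFor_of_wellFoundedLT (· ∈ parab cs J)
    (fun v => cs.length (z * v)) ⟨1, one_mem _⟩
  have hzv : IsMinRep cs J (z * v) := fun u hu => by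
    rw [mul_assoc]
    exact (le_total _ _).elim id (hmin (mul_mem hv hu))
  refine ⟨z * v, hzv, v⁻¹, inv_mem hv, (mul_inv_cancel_right z v).symm, ?_⟩
  rw [← hzv.length_mul (inv_mem hv), mul_inv_cancel_right]

theorem isMinRep_of_not_isRightDescent {w : W} (hw : ∀ j ∈ J, ¬ cs.IsRightDescent w j) :
    IsMinRep cs J w := by
  obtain ⟨m, hm, x, hx, rfl, hlen⟩ := exists_isMinRep_mul cs J w
  obtain ⟨ω, hωJ, hred, rfl⟩ := exists_isReduced_of_mem_parab hx
  rcases ω.eq_nil_or_concat' with rfl | ⟨ω, j, rfl⟩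
  · simpa using hm
  · refine absurd ?_ (hw j (hωJ j (by simp)))
    have hprod : m * cs.wordProd (ω ++ [j]) * cs.simple j = m * cs.wordProd ω := by
      simp [cs.wordProd_append, mul_assoc]
    rw [CoxeterSystem.IsRightDescent, hprod, hlen, hred.eq, List.length_append]
    have := cs.length_mul_le m (cs.wordProd ω)
    have := cs.length_wordProd_le ω
    simp
    omega

theorem IsMinRep.not_isRightDescent {w : W} (hw : IsMinRep cs J w) {j : B} (hj : j ∈ J) :
    ¬ cs.IsRightDescent w j :=
  (hw _ (simple_mem_parab hj)).not_gt

/-- If `s_i w` has a descent `j ∈ J`, the exchange condition deletes a letter from `s_i w`; were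
this letter in `w`, then `w s_j` would be shorter than `w`. -/
theorem IsMinRep.simple_mul {w : W} (hw : IsMinRep cs J w) (i : B) :
    IsMinRep cs J (cs.simple i * w) ∨ ∃ j ∈ J, w * cs.simple j * w⁻¹ = cs.simple i := by
  refine or_iff_not_imp_left.2 fun hnot => ?_
  obtain ⟨j, hj, hdesc⟩ : ∃ j ∈ J, cs.IsRightDescent (cs.simple i * w) j := by
    by_contra! h
    exact hnot (isMinRep_of_not_isRightDescent h)
  obtain ⟨ω, hω, rfl⟩ := cs.exists_isReduced w
  rw [← cs.wordProd_cons] at hdesc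
  obtain ⟨k, hk, he⟩ := exists_wordProd_mul_eq_wordProd_eraseIdx cs
    ((cs.isRightInversion_simple_iff_isRightDescent _ j).2 hdesc)
  refine ⟨j, hj, ?_⟩
  rw [cs.wordProd_cons, mul_assoc] at he
  rcases k with _ | k
  · rwa [mul_inv_eq_iff_eq_mul, ← cs.inv_simple i, eq_inv_mul_iff_mul_eq]
  · rw [List.eraseIdx_cons_succ, cs.wordProd_cons, mul_left_cancel_iff] at he
    refine absurd ?_ (hw.not_isRightDescent hj)
    rw [CoxeterSystem.IsRightDescent, he, hω.eq]
    have := List.length_eraseIdx_add_one (l := ω) (Nat.lt_of_succ_lt_succ hk)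
    have := cs.length_wordProd_le (ω.eraseIdx k)
    omega

/-- By `IsMinRep.simple_mul` for `w⁻¹`, either `s_j w⁻¹` is minimal in its coset of `W_{J'}`, in
which case lengths add in `w s_j · w'⁻¹`, or `w s_j w⁻¹` is one of the simple reflections `s_k`. -/
theorem IsMinRep.mul {w w' : W} (hw : IsMinRep cs J w) (hw_inv : IsMinRep cs J' w⁻¹)
    (hw' : w' ∈ parab cs J') (hdesc : ∀ j ∈ J, ∀ k ∈ J',
      w * cs.simple j * w⁻¹ = cs.simple k → ¬ cs.IsRightDescent w' k) :
    IsMinRep cs J (w' * w) := by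
  refine isMinRep_of_not_isRightDescent fun j hj => ?_
  have length_w'_mul {v : W} (hv : IsMinRep cs J' v⁻¹) {x : W} (hx : x ∈ parab cs J') :
      cs.length (x * v) = cs.length x + cs.length v := by
    rw [← cs.length_inv, mul_inv_rev, hv.length_mul (inv_mem hx), cs.length_inv, cs.length_inv,
      add_comm]
  rw [CoxeterSystem.IsRightDescent, not_lt, length_w'_mul hw_inv hw', mul_assoc]
  rcases hw_inv.simple_mul j with h | ⟨k, hk, h⟩
  · rw [length_w'_mul (by simpa using h) hw']
    exact Nat.add_le_add_left (hw _ (simple_mem_parab hj)) _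
  · have hconj : w * cs.simple j = cs.simple k * w := by
      rw [← h]
      simp [mul_assoc]
    have := not_lt.1 (hdesc j hj k hk (by rw [hconj, mul_inv_cancel_right]))
    rw [hconj, ← mul_assoc, length_w'_mul hw_inv (mul_mem hw' (simple_mem_parab hk))]
    exact Nat.add_le_add_right this _

variable (cs J J') in
theorem exists_parab_mul_isMinRep_mul_parab (z : W) :
    ∃ x' ∈ parab cs J', ∃ w, IsMinRep cs J w ∧ IsMinRep cs J' w⁻¹ ∧ ∃ x ∈ parab cs J,
      z = x' * w * x ∧ cs.length z = cs.length x' + cs.length w + cs.length x := by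
  obtain ⟨y, hy, x, hx, rfl, hyx⟩ := exists_isMinRep_mul cs J z
  obtain ⟨m, hm, u, hu, hmu, hlen⟩ := exists_isMinRep_mul cs J' y⁻¹
  obtain rfl : y = u⁻¹ * m⁻¹ := by rw [← mul_inv_rev, ← hmu, inv_inv]
  rw [cs.length_inv, add_comm, ← cs.length_inv u, ← cs.length_inv m] at hlen
  refine ⟨u⁻¹, inv_mem hu, m⁻¹, fun v hv => ?_, by simpa using hm, x, hx, rfl, by rw [hyx, hlen]⟩
  have := (hy v hv).trans (mul_assoc u⁻¹ m⁻¹ v ▸ cs.length_mul_le u⁻¹ (m⁻¹ * v))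
  omega

end Parabolic

section Twisting

variable (R : SetRel B B)

/-- The pairs `(s_i, s_j)` of simple reflections with `i ~[R] j`. Counting these pairs rather than
`R` itself avoids the injectivity of `i ↦ s_i`. -/
def simplePairs : Set (W × W) := Set.image (Prod.map cs.simple cs.simple) R

/-- The subgroup of `W × W` generated by the pairs `(s_i, s_j)` with `i ~[R] j`, acting on `W` by
`z ↦ g.2 * z * g.1⁻¹`. For `R` the bijection `J → J'` induced by `δ`, it is the graph of `δ` and
the action is `δ`-twisted partial conjugation. -/
def twistGroup : Subgroup (W × W) := Subgroup.closure (simplePairs cs R)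

/-- The relation on indices encoding `δ ∘ Ad(w)⁻¹`, where `R` encodes `δ`: it relates `k` to `j`
if `s_k = w s_i w⁻¹` for some `i ~[R] j`, where `k` is required to stay in `R.cod`. -/
def conjRel (w : W) : SetRel B B :=
  {p | p.1 ∈ R.cod ∧ ∃ i, (i, p.2) ∈ R ∧ w * cs.simple i * w⁻¹ = cs.simple p.1}

/-- `K` is a `w`-special subset of `R.dom`, where `R` encodes `δ`. -/
def IsSpecial (w : W) (K : Set B) : Prop :=
  K ⊆ R.dom ∧ ∀ k ∈ K, ∃ j ∈ K, ∃ i, (j, i) ∈ R ∧ w * cs.simple k * w⁻¹ = cs.simple i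

/-- The twisted orbit of `z` contains an element, no longer than `z`, of the form `w x` with `w`
minimal in its coset and `x` in the parabolic subgroup of a `w`-special set. -/
def HasSpecialReduction (z : W) : Prop :=
  ∃ g ∈ twistGroup cs R, ∃ w K x, IsMinRep cs R.dom w ∧ IsSpecial cs R w K ∧ x ∈ parab cs K ∧
    g.2 * z * g.1⁻¹ = w * x ∧ cs.length (w * x) ≤ cs.length z

variable {cs R}

theorem simple_mem_twistGroup {i j : B} (hij : (i, j) ∈ R) :
    (cs.simple i, cs.simple j) ∈ twistGroup cs R :=
  Subgroup.subset_closure ⟨(i, j), hij, rfl⟩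

theorem twistGroup_le_prod : twistGroup cs R ≤ (parab cs R.dom).prod (parab cs R.cod) := by
  refine (Subgroup.closure_le _).2 ?_
  rintro _ ⟨⟨i, j⟩, hij, rfl⟩
  exact ⟨simple_mem_parab ⟨j, hij⟩, simple_mem_parab ⟨i, hij⟩⟩

theorem swap_mem_twistGroup_inv {g : W × W} (hg : g ∈ twistGroup cs R) :
    g.swap ∈ twistGroup cs R.inv := by
  suffices twistGroup cs R ≤ (twistGroup cs R.inv).comap MulEquiv.prodComm.toMonoidHom from this hg
  refine (Subgroup.closure_le _).2 ?_
  rintro _ ⟨⟨i, j⟩, hij, rfl⟩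
  exact simple_mem_twistGroup hij

theorem exists_mem_twistGroup_of_mem_parab_dom {x : W} (hx : x ∈ parab cs R.dom) :
    ∃ y, (x, y) ∈ twistGroup cs R ∧ cs.length y ≤ cs.length x := by
  obtain ⟨ω, hω, hred, rfl⟩ := exists_isReduced_of_mem_parab hx
  rw [hred.eq]
  clear hred hx
  induction ω with
  | nil => exact ⟨1, cs.wordProd_nil ▸ one_mem (twistGroup cs R), by simp⟩
  | cons i ω ih =>
    obtain ⟨⟨j, hij⟩, hω⟩ := List.forall_mem_cons.1 hω
    obtain ⟨y, hy, hlen⟩ := ih hω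
    refine ⟨cs.simple j * y, ?_, ?_⟩
    · rw [cs.wordProd_cons]
      exact mul_mem (simple_mem_twistGroup hij) hy
    · have := cs.length_mul_le (cs.simple j) y
      rw [cs.length_simple] at this
      rw [List.length_cons]
      omega

theorem exists_mem_twistGroup_of_mem_parab_cod {y : W} (hy : y ∈ parab cs R.cod) :
    ∃ x, (x, y) ∈ twistGroup cs R ∧ cs.length x ≤ cs.length y := by
  rw [← SetRel.dom_inv] at hy
  obtain ⟨x, hyx, hlen⟩ := exists_mem_twistGroup_of_mem_parab_dom hy
  have hxy := swap_mem_twistGroup_inv hyx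
  rw [SetRel.inv_inv] at hxy
  exact ⟨x, hxy, hlen⟩

theorem dom_conjRel_subset {w : W} : (conjRel cs R w).dom ⊆ R.cod := by
  rintro k ⟨j, hk, -⟩
  exact hk

theorem cod_conjRel_subset {w : W} : (conjRel cs R w).cod ⊆ R.cod := by
  rintro j ⟨k, -, i, hij, -⟩
  exact ⟨i, hij⟩

theorem image_simplePairs_conjRel_subset (w : W) :
    Prod.map (MulAut.conj w⁻¹) id '' simplePairs cs (conjRel cs R w) ⊆ simplePairs cs R := by
  rintro _ ⟨_, ⟨⟨k, j⟩, ⟨-, i, hij, h⟩, rfl⟩, rfl⟩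
  exact ⟨(i, j), hij, by simp [← h, mul_assoc]⟩

theorem conj_mem_twistGroup {w p q : W} (h : (p, q) ∈ twistGroup cs (conjRel cs R w)) :
    (w⁻¹ * p * w, q) ∈ twistGroup cs R := by
  have := Subgroup.mem_map_of_mem ((MulAut.conj w⁻¹).toMonoidHom.prodMap (MonoidHom.id W)) h
  rw [twistGroup, MonoidHom.map_closure] at this
  simpa [twistGroup] using Subgroup.closure_mono (image_simplePairs_conjRel_subset w) this

theorem ncard_simplePairs_conjRel_lt {w : W} {i : B} (hi : i ∈ R.dom)
    (hw : w * cs.simple i * w⁻¹ ∉ cs.simple '' R.cod) (hR : (simplePairs cs R).Finite) :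
    (simplePairs cs (conjRel cs R w)).ncard < (simplePairs cs R).ncard := by
  rw [← Set.ncard_image_of_injective _ ((MulAut.conj w⁻¹).injective.prodMap Function.injective_id)]
  refine Set.ncard_lt_ncard (Set.ssubset_iff_exists.2 ⟨image_simplePairs_conjRel_subset w, ?_⟩) hR
  obtain ⟨j, hij⟩ := hi
  refine ⟨(cs.simple i, cs.simple j), ⟨(i, j), hij, rfl⟩, ?_⟩
  rintro ⟨_, ⟨⟨k, l⟩, ⟨hk, -⟩, rfl⟩, h⟩
  refine hw ⟨k, hk, ?_⟩
  have hki : w⁻¹ * cs.simple k * w = cs.simple i := by simpa using congrArg Prod.fst h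
  simp [← hki, mul_assoc]

theorem IsSpecial.of_conjRel {w w' : W} {K : Set B} (hK : IsSpecial cs (conjRel cs R w) w' K) :
    IsSpecial cs R (w' * w) {i ∈ R.dom | w * cs.simple i * w⁻¹ ∈ cs.simple '' K} := by
  refine ⟨fun i hi => hi.1, ?_⟩
  rintro i ⟨-, k, hk, hik⟩
  obtain ⟨l, hl, j, ⟨-, i', hi'j, hi'l⟩, hkj⟩ := hK.2 k hk
  refine ⟨i', ⟨⟨j, hi'j⟩, l, hl, hi'l.symm⟩, j, hi'j, ?_⟩
  rw [← hkj, hik]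
  group

theorem IsSpecial.conj_mem_parab {w w' u : W} {K : Set B}
    (hK : IsSpecial cs (conjRel cs R w) w' K) (hu : u ∈ parab cs K) :
    w⁻¹ * u * w ∈ parab cs {i ∈ R.dom | w * cs.simple i * w⁻¹ ∈ cs.simple '' K} := by
  suffices parab cs K ≤ (parab cs _).comap (MulAut.conj w⁻¹).toMonoidHom by simpa using this hu
  refine (Subgroup.closure_le _).2 ?_
  rintro _ ⟨k, hk, rfl⟩
  obtain ⟨j, -, i, hij, hik⟩ := hK.1 hk
  have hconj : MulAut.conj w⁻¹ (cs.simple k) = cs.simple i := by simp [← hik, mul_assoc]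
  have hi : i ∈ {i ∈ R.dom | w * cs.simple i * w⁻¹ ∈ cs.simple '' K} :=
    ⟨⟨j, hij⟩, k, hk, hik.symm⟩
  change MulAut.conj w⁻¹ (cs.simple k) ∈ parab cs _
  rw [hconj]
  exact simple_mem_parab hi

theorem hasSpecialReduction_of_conj_mem {w x x' : W} (hw : IsMinRep cs R.dom w)
    (hx : x ∈ parab cs R.dom) (hx' : x' ∈ parab cs R.cod)
    (hlen : cs.length (x' * w * x) = cs.length x' + cs.length w + cs.length x)
    (hconj : ∀ i ∈ R.dom, w * cs.simple i * w⁻¹ ∈ cs.simple '' R.cod) :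
    HasSpecialReduction cs R (x' * w * x) := by
  obtain ⟨a, ha, halen⟩ := exists_mem_twistGroup_of_mem_parab_cod hx'
  have hxa : x * a ∈ parab cs R.dom := mul_mem hx (twistGroup_le_prod ha).1
  refine ⟨(a, x')⁻¹, inv_mem ha, w, R.dom, x * a, hw, ⟨subset_rfl, fun k hk => ?_⟩, hxa,
    by simp [mul_assoc], ?_⟩
  · obtain ⟨j', ⟨j, hjj'⟩, h⟩ := hconj k hk
    exact ⟨j, ⟨j', hjj'⟩, j', hjj', h.symm⟩
  · rw [hw.length_mul hxa, hlen]
    have := cs.length_mul_le x a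
    omega

theorem HasSpecialReduction.of_conjRel {w x x' y : W} (hw : IsMinRep cs R.dom w)
    (hw_inv : IsMinRep cs R.cod w⁻¹) (hxy : (x, y) ∈ twistGroup cs R)
    (hylen : cs.length y ≤ cs.length x) (hx' : x' ∈ parab cs R.cod)
    (hlen : cs.length (x' * w * x) = cs.length x' + cs.length w + cs.length x)
    (h : HasSpecialReduction cs (conjRel cs R w) (y * x')) :
    HasSpecialReduction cs R (x' * w * x) := by
  obtain ⟨⟨p, q⟩, hpq, w', K, u, hw', hK, hu, he, hle⟩ := h
  have hw'_mem : w' ∈ parab cs R.cod := by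
    obtain ⟨hp, hq⟩ := twistGroup_le_prod hpq
    rw [← mul_inv_eq_iff_eq_mul.2 he]
    exact mul_mem (mul_mem (mul_mem (parab_mono cod_conjRel_subset hq)
      (mul_mem (twistGroup_le_prod hxy).2 hx'))
      (inv_mem (parab_mono dom_conjRel_subset hp)))
      (inv_mem (parab_mono (hK.1.trans dom_conjRel_subset) hu))
  have hw'w : IsMinRep cs R.dom (w' * w) := by
    refine hw.mul hw_inv hw'_mem fun j hj k hk hjk => hw'.not_isRightDescent ?_
    obtain ⟨j', hjj'⟩ := hj
    exact ⟨j', hk, j, hjj', hjk⟩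
  have hprod : w' * w * (w⁻¹ * u * w) = w' * u * w := by group
  refine ⟨(w⁻¹ * p * w, q) * (x, y), mul_mem (conj_mem_twistGroup hpq) hxy, w' * w, _,
    w⁻¹ * u * w, hw'w, hK.of_conjRel, hK.conj_mem_parab hu, ?_, ?_⟩
  · rw [hprod, ← he]
    simp only [Prod.mk_mul_mk]
    group
  · rw [hprod, hlen]
    have := cs.length_mul_le (w' * u) w
    have := cs.length_mul_le y x'
    omega

theorem hasSpecialReduction (hR : (simplePairs cs R).Finite) (z : W) :
    HasSpecialReduction cs R z := by
  induction hn : (simplePairs cs R).ncard using Nat.strong_induction_on generalizing R z with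
  | _ n ih =>
    obtain ⟨x', hx', w, hw, hw_inv, x, hx, rfl, hlen⟩ :=
      exists_parab_mul_isMinRep_mul_parab cs R.dom R.cod z
    by_cases hconj : ∀ i ∈ R.dom, w * cs.simple i * w⁻¹ ∈ cs.simple '' R.cod
    · exact hasSpecialReduction_of_conj_mem hw hx hx' hlen hconj
    · push Not at hconj
      obtain ⟨i, hi, hiw⟩ := hconj
      obtain ⟨y, hxy, hylen⟩ := exists_mem_twistGroup_of_mem_parab_dom hx
      have hlt := ncard_simplePairs_conjRel_lt hi hiw hR
      have hfin : (simplePairs cs (conjRel cs R w)).Finite := Set.Finite.of_finite_image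
        (hR.subset (image_simplePairs_conjRel_subset w))
        ((MulAut.conj w⁻¹).injective.prodMap Function.injective_id).injOn
      exact .of_conjRel hw hw_inv hxy hylen hx' hlen (ih _ (hn ▸ hlt) hfin _ rfl)

end Twisting

section Isomorphism

/-- The relation on indices induced by `δ`: it relates `j ∈ J` to `j'` if `δ(s_j) = s_{j'}`. -/
def twistRel : SetRel B B :=
  {p | ∃ hj : p.1 ∈ J, (δ (sJ cs J p.1 hj) : W) = cs.simple p.2}

variable {cs J J' δ}

theorem MapsSimples.dom_twistRel (hδ : MapsSimples cs J J' δ) :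
    (twistRel cs J J' δ).dom = J := by
  refine Set.Subset.antisymm (fun j ⟨_, hj, _⟩ => hj) fun j hj => ?_
  obtain ⟨j', -, h⟩ := hδ.1 j hj
  exact ⟨j', hj, h⟩

theorem finite_simplePairs_twistRel (hJ : J.Finite) :
    (simplePairs cs (twistRel cs J J' δ)).Finite := by
  have := hJ.to_subtype
  refine (Set.finite_range fun j : J => (cs.simple j, (δ (sJ cs J j j.2) : W))).subset ?_
  rintro _ ⟨⟨j, j'⟩, ⟨hj, h⟩, rfl⟩
  exact ⟨⟨j, hj⟩, Prod.ext rfl h⟩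

theorem exists_eq_of_mem_twistGroup {g : W × W} (hg : g ∈ twistGroup cs (twistRel cs J J' δ)) :
    ∃ u : parab cs J, ((u : W), (δ u : W)) = g := by
  let graph := (parab cs J).subtype.prod ((parab cs J').subtype.comp δ.toMonoidHom)
  suffices twistGroup cs (twistRel cs J J' δ) ≤ graph.range from this hg
  refine (Subgroup.closure_le _).2 ?_
  rintro _ ⟨⟨j, j'⟩, ⟨hj, h⟩, rfl⟩
  exact ⟨sJ cs J j hj, Prod.ext rfl h⟩

theorem mul_mul_inv_mem_orbitOf {g : W × W} (hg : g ∈ twistGroup cs (twistRel cs J J' δ))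
    {v z : W} (hv : v ∈ orbitOf cs J J' δ z) : g.2 * v * g.1⁻¹ ∈ orbitOf cs J J' δ z := by
  obtain ⟨u, rfl⟩ := exists_eq_of_mem_twistGroup hg
  obtain ⟨u₀, _, rfl, rfl⟩ := hv
  exact ⟨u * u₀, _, rfl, by simp [mul_assoc]⟩

theorem IsSpecial.subset_Iset {w : W} {K : Set B}
    (hK : IsSpecial cs (twistRel cs J J' δ) w K) : K ⊆ Iset cs J J' δ w := by
  refine Set.subset_sUnion_of_mem ⟨fun k hk => ?_, fun k hk => ?_⟩
  · obtain ⟨_, hkJ, -⟩ := hK.1 hk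
    exact hkJ
  · obtain ⟨j, hj, j', ⟨hjJ, hδj⟩, h⟩ := hK.2 k hk
    exact ⟨j, hjJ, hj, h.trans hδj.symm⟩

variable (cs J J' δ)

theorem stmt7_general (hδ : MapsSimples cs J J' δ) (hJ : J.Finite) (z : W) :
    ∃ v ∈ orbitOf cs J J' δ z,
      (∀ v' ∈ orbitOf cs J J' δ z, cs.length v ≤ cs.length v') ∧
      ∃ w : W, IsMinRep cs J w ∧
        ∃ x ∈ parab cs (Iset cs J J' δ w), v = w * x := by
  obtain ⟨v, hv, hmin⟩ := exists_minimalFor_of_wellFoundedLT (· ∈ orbitOf cs J J' δ z) cs.length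
    ⟨z, 1, z, rfl, by simp⟩
  obtain ⟨g, hg, w, K, x, hw, hK, hx, hgv, hle⟩ :=
    hasSpecialReduction (finite_simplePairs_twistRel hJ) v
  refine ⟨w * x, hgv ▸ mul_mul_inv_mem_orbitOf hg hv, fun v' hv' => ?_, w,
    hδ.dom_twistRel ▸ hw, x, parab_mono hK.subset_Iset hx, rfl⟩
  exact hle.trans ((le_total _ _).elim id (hmin hv'))

end Isomorphism

end General

/-- Assume `W_J` is finite. Every orbit of the `δ`-twisted
partial conjugation action of `W_J` on `W` contains a minimal length element
of the form `w x` with `w ∈ W^J` and `x ∈ W_{I(J,w,δ)}`. -/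
theorem stmt7 (hδ : MapsSimples cs J J' δ)
    (hfin : (parab cs J : Set W).Finite) (z : W) :
    ∃ v ∈ orbitOf cs J J' δ z,
      (∀ v' ∈ orbitOf cs J J' δ z, cs.length v ≤ cs.length v') ∧
      ∃ w : W, IsMinRep cs J w ∧
        ∃ x ∈ parab cs (Iset cs J J' δ w), v = w * x := by
  exact stmt7_general cs J J' δ hδ J.toFinite z

end PartialConjugation
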